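/- arXiv:1610.09129 — 3 statements merged into one kernel-verified Lean document; each statement's English description precedes it below -/
import Mathlib

section
/- Let t be a right trace on a right ideal I of a pivotal k-category C, and define the horizontal part I^= = {V ∈ I : V* ∈ I and t_V(f) = t_{V*}(f*) for all f ∈ End(V)}. Then I^= is a pseudo-monoid: it is closed under duals, retracts and tensor products. Moreover, if (V_i) is a finite family of objects of I^= and W is an object with W ∈ I and W* ∈ I which is a direct sum of the family (V_i), then W ∈ I^=. -/
open CategoryTheory MonoidalCategory

universe v u

/-- The data of a pivotal structure: a dual object together with the four
(co)evaluation morphisms. -/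
structure PivotalData (C : Type u) [Category.{v} C] [MonoidalCategory C] where
  dual : C → C
  evR : ∀ V : C, dual V ⊗ V ⟶ 𝟙_ C
  coevR : ∀ V : C, 𝟙_ C ⟶ V ⊗ dual V
  evL : ∀ V : C, V ⊗ dual V ⟶ 𝟙_ C
  coevL : ∀ V : C, 𝟙_ C ⟶ dual V ⊗ V

namespace PivotalData

variable {C : Type u} [Category.{v} C] [MonoidalCategory C] (P : PivotalData C)

/-- The left dual of a morphism. -/
def dualHomL {V W : C} (f : V ⟶ W) : P.dual W ⟶ P.dual V :=
  (ρ_ (P.dual W)).inv ≫ (P.dual W ◁ P.coevR V) ≫ (P.dual W ◁ (f ▷ P.dual V)) ≫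
    (α_ (P.dual W) W (P.dual V)).inv ≫ (P.evR W ▷ P.dual V) ≫ (λ_ (P.dual V)).hom

/-- The right dual of a morphism. -/
def dualHomR {V W : C} (f : V ⟶ W) : P.dual W ⟶ P.dual V :=
  (λ_ (P.dual W)).inv ≫ (P.coevL V ▷ P.dual W) ≫ (α_ (P.dual V) V (P.dual W)).hom ≫
    (P.dual V ◁ (f ▷ P.dual W)) ≫ (P.dual V ◁ P.evL W) ≫ (ρ_ (P.dual V)).hom

/-- The right partial trace `ptr_R(f) = (id_V ⊗ ev←_W) ∘ (f ⊗ id_{W*}) ∘ (id_V ⊗ coev→_W)`. -/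
def ptrR {V W : C} (f : V ⊗ W ⟶ V ⊗ W) : V ⟶ V :=
  (ρ_ V).inv ≫ (V ◁ P.coevR W) ≫ (α_ V W (P.dual W)).inv ≫ (f ▷ P.dual W) ≫
    (α_ V W (P.dual W)).hom ≫ (V ◁ P.evL W) ≫ (ρ_ V).hom

/-- The left partial trace `ptr_L(f) = (ev→_W ⊗ id_V) ∘ (id_{W*} ⊗ f) ∘ (coev←_W ⊗ id_V)`. -/
def ptrL {V W : C} (f : W ⊗ V ⟶ W ⊗ V) : V ⟶ V :=
  (λ_ V).inv ≫ (P.coevL W ▷ V) ≫ (α_ (P.dual W) W V).hom ≫ (P.dual W ◁ f) ≫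
    (α_ (P.dual W) W V).inv ≫ (P.evR W ▷ V) ≫ (λ_ V).hom

end PivotalData

/-- A pivotal structure on a monoidal category: `(V*, ev→, coev→)` exhibits `V*` as a left
dual of `V`, `(V*, ev←, coev←)` exhibits it as a right dual, and the left and right duals of
every morphism coincide. -/
structure Pivotal (C : Type u) [Category.{v} C] [MonoidalCategory C] extends PivotalData C where
  zig₁ : ∀ V : C, (dual V ◁ coevR V) ≫ (α_ (dual V) V (dual V)).inv ≫ (evR V ▷ dual V) =
      (ρ_ (dual V)).hom ≫ (λ_ (dual V)).inv
  zig₂ : ∀ V : C, (coevR V ▷ V) ≫ (α_ V (dual V) V).hom ≫ (V ◁ evR V) =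
      (λ_ V).hom ≫ (ρ_ V).inv
  zig₃ : ∀ V : C, (V ◁ coevL V) ≫ (α_ V (dual V) V).inv ≫ (evL V ▷ V) =
      (ρ_ V).hom ≫ (λ_ V).inv
  zig₄ : ∀ V : C, (coevL V ▷ dual V) ≫ (α_ (dual V) V (dual V)).hom ≫ (dual V ◁ evL V) =
      (λ_ (dual V)).hom ≫ (ρ_ (dual V)).inv
  dualHom_eq : ∀ {V W : C} (f : V ⟶ W), toPivotalData.dualHomL f = toPivotalData.dualHomR f

namespace Pivotal

variable {C : Type u} [Category.{v} C] [MonoidalCategory C] (P : Pivotal C)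

/-- The dual `f* : W* ⟶ V*` of a morphism `f : V ⟶ W`. -/
def dualHom {V W : C} (f : V ⟶ W) : P.dual W ⟶ P.dual V := P.toPivotalData.dualHomL f

/-- The right partial trace. -/
def ptrR {V W : C} (f : V ⊗ W ⟶ V ⊗ W) : V ⟶ V := P.toPivotalData.ptrR f

/-- The left partial trace. -/
def ptrL {V W : C} (f : W ⊗ V ⟶ W ⊗ V) : V ⟶ V := P.toPivotalData.ptrL f

/-- The twist `θ_V = ptr_R(c_{V,V})`. -/
def twist [BraidedCategory C] (V : C) : V ⟶ V := P.ptrR (β_ V V).hom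

end Pivotal

/-- `V` is a retract of `W`. -/
def IsRetractOf {C : Type u} [Category.{v} C] (V W : C) : Prop :=
  ∃ (α : V ⟶ W) (β : W ⟶ V), α ≫ β = 𝟙 V

/-- `W` is a direct sum of the finite family `Vi`. -/
def IsDirectSumOf {C : Type u} [Category.{v} C] [Preadditive C] (W : C) {n : ℕ}
    (Vi : Fin n → C) : Prop :=
  ∃ (α : ∀ i, Vi i ⟶ W) (β : ∀ i, W ⟶ Vi i),
    (∀ i, α i ≫ β i = 𝟙 (Vi i)) ∧ (∀ i j, i ≠ j → α i ≫ β j = 0) ∧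
      (∑ i, β i ≫ α i = 𝟙 W)

/-- An object is simple if its endomorphisms are exactly the scalar multiples of the
identity. -/
def IsKSimple (k : Type*) [Semiring k] {C : Type u} [Category.{v} C] [Preadditive C]
    [Linear k C] (V : C) : Prop :=
  ∀ f : V ⟶ V, ∃ a : k, f = a • 𝟙 V

/-- An object is semisimple if it is a direct sum of simple objects. -/
def IsSemisimpleObj (k : Type*) [Semiring k] {C : Type u} [Category.{v} C] [Preadditive C]
    [Linear k C] (V : C) : Prop :=
  ∃ (n : ℕ) (S : Fin n → C), (∀ i, IsKSimple k (S i)) ∧ IsDirectSumOf V S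

/-- The horizontal part `I^=` of a right ideal `I` with right trace `t`:
`V ∈ I`, `V* ∈ I` and `t_V(f) = t_{V*}(f*)` for all `f ∈ End(V)`. -/
def Horiz {k : Type*} [CommRing k] {C : Type u} [Category.{v} C] [MonoidalCategory C]
    (P : Pivotal C) (I : C → Prop) (t : ∀ V : C, I V → (V ⟶ V) → k) (V : C) : Prop :=
  ∃ (hV : I V) (hV' : I (P.dual V)),
    ∀ f : V ⟶ V, t V hV f = t (P.dual V) hV' (P.dualHom f)

/-!
An endomorphism of `W` that factors through an object `V` of `I^=` has the same trace as its dual: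
cyclicity moves the trace to `V`, where it may be dualised, and back. Closure under retracts and
under direct sums is this remark applied to `f = (f ≫ α) ≫ β` and to `f = ∑ i, (f ≫ β i) ≫ α i`.
For duals, the natural isomorphism `V ≅ V**` makes every endomorphism of `V*` the dual of one
of `V`.

For tensor products the point is that `t_W (ptr_L f) = t_{V*} ((ptr_R f)*)` as soon as `V*` and `W`
are in `I`: both are the trace of a single endomorphism of `V* ⊗ V ⊗ W`. Hence
`t_{V ⊗ W} (f) = t_V (ptr_R f) = t_{V*} ((ptr_R f)*) = t_W (ptr_L f) = t_{W*} ((ptr_L f)*)`,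
and `(ptr_L f)*` is a right partial trace of `f*`, seen as an endomorphism of `W* ⊗ V*`.
-/

section ExactPairing

variable {C : Type u} [Category.{v} C] [MonoidalCategory C]

theorem hom_ext_of_whiskerRight_evaluation {X Y Y' : C} [ExactPairing Y Y'] {g h : X ⟶ Y'}
    (hgh : g ▷ Y ≫ ε_ Y Y' = h ▷ Y ≫ ε_ Y Y') : g = h := by
  have transpose : ∀ e : X ⟶ Y',
      (tensorRightHomEquiv X Y Y' (𝟙_ C)).symm (e ≫ (λ_ Y').inv) = e ▷ Y ≫ ε_ Y Y' := by
    intro e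
    simp only [tensorRightHomEquiv, Equiv.coe_fn_symm_mk]
    monoidal
  rw [← cancel_mono (λ_ Y').inv]
  apply (tensorRightHomEquiv X Y Y' (𝟙_ C)).symm.injective
  rw [transpose, transpose, hgh]

theorem rightDualIso_hom_whiskerRight_evaluation {X Y₁ Y₂ : C} (p₁ : ExactPairing X Y₁)
    (p₂ : ExactPairing X Y₂) :
    (rightDualIso p₁ p₂).hom ▷ X ≫ p₂.evaluation' = p₁.evaluation' := by
  have mate := @rightAdjointMate_comp_evaluation C _ _ X X ⟨Y₂⟩ ⟨Y₁⟩ (𝟙 X)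
  rwa [MonoidalCategory.whiskerLeft_id, Category.id_comp] at mate

end ExactPairing

namespace Pivotal

variable {C : Type u} [Category.{v} C] [MonoidalCategory C] (P : Pivotal C)

/-- The object `V*` as the right dual of `V` in Mathlib's sense, by means of `ev→` and `coev→`
(the paper calls this a left dual). -/
abbrev hasRightDual (V : C) : HasRightDual V where
  rightDual := P.dual V
  exact :=
    { coevaluation' := P.coevR V
      evaluation' := P.evR V
      coevaluation_evaluation' := P.zig₁ V
      evaluation_coevaluation' := P.zig₂ V }

/-- The object `V*` as the left dual of `V` in Mathlib's sense, by means of `ev←` and `coev←`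
(the paper calls this a right dual). -/
abbrev hasLeftDual (V : C) : HasLeftDual V where
  leftDual := P.dual V
  exact :=
    { coevaluation' := P.coevL V
      evaluation' := P.evL V
      coevaluation_evaluation' := P.zig₃ V
      evaluation_coevaluation' := P.zig₄ V }

theorem hom_ext_evR {X V : C} {g h : X ⟶ P.dual V}
    (hgh : g ▷ V ≫ P.evR V = h ▷ V ≫ P.evR V) : g = h :=
  let _ := P.hasRightDual V
  hom_ext_of_whiskerRight_evaluation (Y' := Vᘁ) hgh

theorem dualHom_id (V : C) : P.dualHom (𝟙 V) = 𝟙 (P.dual V) :=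
  let _ := P.hasRightDual V
  rightAdjointMate_id (X := V)

theorem dualHom_comp {U V W : C} (f : U ⟶ V) (g : V ⟶ W) :
    P.dualHom (f ≫ g) = P.dualHom g ≫ P.dualHom f :=
  let _ := P.hasRightDual U
  let _ := P.hasRightDual V
  let _ := P.hasRightDual W
  comp_rightAdjointMate (f := f) (g := g)

theorem dualHom_add [Preadditive C] [MonoidalPreadditive C] {V W : C} (f g : V ⟶ W) :
    P.dualHom (f + g) = P.dualHom f + P.dualHom g := by
  simp [dualHom, PivotalData.dualHomL]

theorem dualHom_evR {V W : C} (f : V ⟶ W) :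
    P.dualHom f ▷ V ≫ P.evR V = P.dual W ◁ f ≫ P.evR W :=
  let _ := P.hasRightDual V
  let _ := P.hasRightDual W
  rightAdjointMate_comp_evaluation f

theorem dualHom_evL {V W : C} (f : V ⟶ W) :
    V ◁ P.dualHom f ≫ P.evL V = f ▷ P.dual W ≫ P.evL W := by
  let _ := P.hasLeftDual V
  let _ := P.hasLeftDual W
  have dualHom_eq_mate : P.dualHom f = (ᘁf) := by
    rw [dualHom, P.dualHom_eq, PivotalData.dualHomR, leftAdjointMate,
      associator_naturality_middle_assoc]
    rfl
  rw [dualHom_eq_mate]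
  exact leftAdjointMate_comp_evaluation f

/-- The canonical isomorphism `V ≅ V**`: both objects are right duals of `V*`, the first through
`ev←` of `V` and the second through `ev→` of `V*`. -/
def doubleDualIso (V : C) : V ≅ P.dual (P.dual V) :=
  rightDualIso (P.hasLeftDual V).exact (P.hasRightDual (P.dual V)).exact

theorem doubleDualIso_hom_evR (V : C) :
    (P.doubleDualIso V).hom ▷ P.dual V ≫ P.evR (P.dual V) = P.evL V :=
  rightDualIso_hom_whiskerRight_evaluation (P.hasLeftDual V).exact
    (P.hasRightDual (P.dual V)).exact

theorem doubleDualIso_hom_naturality {V W : C} (f : V ⟶ W) :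
    (P.doubleDualIso V).hom ≫ P.dualHom (P.dualHom f) = f ≫ (P.doubleDualIso W).hom := by
  apply P.hom_ext_evR
  calc
    _ = V ◁ P.dualHom f ≫ P.evL V := by
      rw [comp_whiskerRight, Category.assoc, dualHom_evR, ← whisker_exchange_assoc,
        doubleDualIso_hom_evR]
    _ = f ▷ P.dual W ≫ P.evL W := P.dualHom_evL f
    _ = _ := by rw [comp_whiskerRight, Category.assoc, doubleDualIso_hom_evR]

theorem dualHom_dualHom {V W : C} (f : V ⟶ W) :
    P.dualHom (P.dualHom f) = (P.doubleDualIso V).inv ≫ f ≫ (P.doubleDualIso W).hom := by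
  rw [Iso.eq_inv_comp, doubleDualIso_hom_naturality]

theorem dualHom_injective (V W : C) :
    Function.Injective (P.dualHom : (V ⟶ W) → (P.dual W ⟶ P.dual V)) := by
  intro f g hfg
  rw [← cancel_mono (P.doubleDualIso W).hom, ← doubleDualIso_hom_naturality,
    ← doubleDualIso_hom_naturality, hfg]

theorem dualHom_surjective (V W : C) :
    Function.Surjective (P.dualHom : (V ⟶ W) → (P.dual W ⟶ P.dual V)) := by
  intro f
  refine ⟨(P.doubleDualIso V).hom ≫ P.dualHom f ≫ (P.doubleDualIso W).inv,
    P.dualHom_injective _ _ ?_⟩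
  simp [dualHom_dualHom]

theorem ptrR_whiskerRight_comp {U V : C} (g : U ⟶ U) (F : U ⊗ V ⟶ U ⊗ V) :
    P.ptrR (g ▷ V ≫ F) = g ≫ P.ptrR F := by
  dsimp only [ptrR, PivotalData.ptrR]
  calc
    _ = 𝟙 _ ⊗≫ (U ◁ P.coevR V ≫ g ▷ (V ⊗ P.dual V)) ⊗≫ F ▷ P.dual V ⊗≫ U ◁ P.evL V ⊗≫ 𝟙 _ := by
      monoidal
    _ = _ := by
      rw [whisker_exchange]
      monoidal

theorem ptrR_comp_whiskerRight {U V : C} (g : U ⟶ U) (F : U ⊗ V ⟶ U ⊗ V) :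
    P.ptrR (F ≫ g ▷ V) = P.ptrR F ≫ g := by
  dsimp only [ptrR, PivotalData.ptrR]
  calc
    _ = 𝟙 _ ⊗≫ U ◁ P.coevR V ⊗≫ F ▷ P.dual V ⊗≫ (g ▷ (V ⊗ P.dual V) ≫ U ◁ P.evL V) ⊗≫ 𝟙 _ := by
      monoidal
    _ = _ := by
      rw [← whisker_exchange]
      monoidal

theorem ptrR_whiskerLeft {U V W : C} (f : V ⊗ W ⟶ V ⊗ W) :
    P.ptrR ((α_ U V W).hom ≫ U ◁ f ≫ (α_ U V W).inv) = U ◁ P.ptrR f := by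
  dsimp only [ptrR, PivotalData.ptrR]
  monoidal

theorem ptrR_evR_coevL {V : C} (φ : V ⟶ V) :
    P.ptrR (P.dual V ◁ φ ≫ P.evR V ≫ P.coevL V) = P.dualHom φ := by
  dsimp only [ptrR, PivotalData.ptrR, dualHom, PivotalData.dualHomL]
  calc
    _ = (ρ_ _).inv ≫ P.dual V ◁ P.coevR V ≫ P.dual V ◁ φ ▷ P.dual V ≫
        (α_ (P.dual V) V (P.dual V)).inv ≫ P.evR V ▷ P.dual V ≫
        (P.coevL V ▷ P.dual V ≫ (α_ _ _ _).hom ≫ P.dual V ◁ P.evL V) ≫ (ρ_ _).hom := by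
      monoidal
    _ = _ := by
      rw [P.zig₄]
      simp

/-- The right partial trace over `V*`, closed up with `coev←` and `ev→` of `V`. Using these rather
than the morphisms `coev→` and `ev←` of `V*` avoids the double dual `V**`. -/
def ptrRDual {U V : C} (F : U ⊗ P.dual V ⟶ U ⊗ P.dual V) : U ⟶ U :=
  (ρ_ U).inv ≫ U ◁ P.coevL V ≫ (α_ U (P.dual V) V).inv ≫ F ▷ V ≫
    (α_ U (P.dual V) V).hom ≫ U ◁ P.evR V ≫ (ρ_ U).hom

/-- The nested evaluation that pairs `W* ⊗ V*` with `V ⊗ W`. -/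
def evRTensor (V W : C) : (P.dual W ⊗ P.dual V) ⊗ (V ⊗ W) ⟶ 𝟙_ C :=
  𝟙 _ ⊗≫ P.dual W ◁ P.evR V ▷ W ⊗≫ P.evR W

/-- The canonical isomorphism `(V ⊗ W)* ≅ W* ⊗ V*` that is compatible with `ev→`. -/
def dualTensorIso (V W : C) : P.dual (V ⊗ W) ≅ P.dual W ⊗ P.dual V :=
  letI := P.hasRightDual V
  letI := P.hasRightDual W
  letI := P.hasRightDual (V ⊗ W)
  rightDualTensorIso V W

theorem dualTensorIso_hom_evRTensor (V W : C) :
    (P.dualTensorIso V W).hom ▷ (V ⊗ W) ≫ P.evRTensor V W = P.evR (V ⊗ W) :=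
  let _ := P.hasRightDual V
  let _ := P.hasRightDual W
  rightDualIso_hom_whiskerRight_evaluation (P.hasRightDual (V ⊗ W)).exact
    (ExactPairing.tensor (Y₁ := Vᘁ) (Y₂ := Wᘁ))

theorem dualTensorIso_inv_evR (V W : C) :
    (P.dualTensorIso V W).inv ▷ (V ⊗ W) ≫ P.evR (V ⊗ W) = P.evRTensor V W := by
  rw [← dualTensorIso_hom_evRTensor, inv_hom_whiskerRight_assoc]

/-- The dual of an endomorphism of `V ⊗ W`, transported along `(V ⊗ W)* ≅ W* ⊗ V*`. -/
def dualTensorHom {V W : C} (f : V ⊗ W ⟶ V ⊗ W) :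
    P.dual W ⊗ P.dual V ⟶ P.dual W ⊗ P.dual V :=
  (P.dualTensorIso V W).inv ≫ P.dualHom f ≫ (P.dualTensorIso V W).hom

theorem dualTensorHom_evRTensor {V W : C} (f : V ⊗ W ⟶ V ⊗ W) :
    P.dualTensorHom f ▷ (V ⊗ W) ≫ P.evRTensor V W =
      (P.dual W ⊗ P.dual V) ◁ f ≫ P.evRTensor V W := by
  rw [dualTensorHom, comp_whiskerRight, comp_whiskerRight, Category.assoc, Category.assoc,
    dualTensorIso_hom_evRTensor, dualHom_evR, ← whisker_exchange_assoc, dualTensorIso_inv_evR]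

theorem dualHom_ptrL {V W : C} (f : V ⊗ W ⟶ V ⊗ W) :
    P.dualHom (P.ptrL f) = P.ptrRDual (P.dualTensorHom f) := by
  apply P.hom_ext_evR
  rw [dualHom_evR]
  symm
  calc
    _ = 𝟙 _ ⊗≫ P.dual W ◁ P.coevL V ▷ W ⊗≫
          (P.dualTensorHom f ▷ (V ⊗ W) ≫ P.evRTensor V W) := by
      dsimp only [ptrRDual, evRTensor]
      monoidal
    _ = _ := by
      rw [dualTensorHom_evRTensor]
      dsimp only [ptrL, PivotalData.ptrL, evRTensor]
      monoidal

end Pivotal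

/-- A right ideal of a monoidal category, encoded as a predicate on objects. -/
structure IsRightIdeal {C : Type u} [Category.{v} C] [MonoidalCategory C] (I : C → Prop) :
    Prop where
  tensor_mem : ∀ V W : C, I V → I (V ⊗ W)
  of_isRetractOf : ∀ V W : C, I W → IsRetractOf V W → I V

/-- The cyclicity and partial trace axioms of a right trace on `I`. Linearity is a separate
matter, so that the notion makes sense in any pivotal category. -/
structure IsRightTrace {k : Type*} {C : Type u} [Category.{v} C] [MonoidalCategory C]
    (P : Pivotal C) (I : C → Prop) (t : ∀ V : C, I V → (V ⟶ V) → k) : Prop where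
  cyclic : ∀ (U V : C) (hU : I U) (hV : I V) (f : V ⟶ U) (g : U ⟶ V),
    t V hV (f ≫ g) = t U hU (g ≫ f)
  map_tensor : ∀ (U W : C) (hU : I U) (hUW : I (U ⊗ W)) (f : U ⊗ W ⟶ U ⊗ W),
    t (U ⊗ W) hUW f = t U hU (P.ptrR f)

theorem IsRightIdeal.of_iso {C : Type u} [Category.{v} C] [MonoidalCategory C] {I : C → Prop}
    (hI : IsRightIdeal I) {V W : C} (e : V ≅ W) (hW : I W) : I V :=
  hI.of_isRetractOf V W hW ⟨e.hom, e.inv, e.hom_inv_id⟩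

theorem IsRetractOf.dual {C : Type u} [Category.{v} C] [MonoidalCategory C] {V W : C}
    (h : IsRetractOf V W) (P : Pivotal C) : IsRetractOf (P.dual V) (P.dual W) := by
  obtain ⟨α, β, hαβ⟩ := h
  exact ⟨P.dualHom β, P.dualHom α, by rw [← P.dualHom_comp, hαβ, P.dualHom_id]⟩

namespace IsRightTrace

variable {k : Type*} {C : Type u} [Category.{v} C] [MonoidalCategory C]
  {P : Pivotal C} {I : C → Prop} {t : ∀ V : C, I V → (V ⟶ V) → k}

theorem map_conj_iso (ht : IsRightTrace P I t) {U V : C} (hU : I U) (hV : I V) (e : U ≅ V)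
    (f : U ⟶ U) : t V hV (e.inv ≫ f ≫ e.hom) = t U hU f := by
  rw [ht.cyclic U V hU hV, Category.assoc, e.hom_inv_id, Category.comp_id]

theorem map_ptrL (ht : IsRightTrace P I t) (hI : IsRightIdeal I) {V W : C} (hV' : I (P.dual V))
    (hW : I W) (f : V ⊗ W ⟶ V ⊗ W) :
    t W hW (P.ptrL f) = t (P.dual V) hV' (P.dualHom (P.ptrR f)) := by
  have hVV : I (P.dual V ⊗ V) := hI.tensor_mem _ _ hV'
  have hVVW : I ((P.dual V ⊗ V) ⊗ W) := hI.tensor_mem _ _ hVV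
  let cup : W ⟶ (P.dual V ⊗ V) ⊗ W := (λ_ W).inv ≫ P.coevL V ▷ W
  let cap : (P.dual V ⊗ V) ⊗ W ⟶ W := P.evR V ▷ W ≫ (λ_ W).hom
  let F : (P.dual V ⊗ V) ⊗ W ⟶ (P.dual V ⊗ V) ⊗ W :=
    (α_ (P.dual V) V W).hom ≫ P.dual V ◁ f ≫ (α_ (P.dual V) V W).inv
  calc
    t W hW (P.ptrL f) = t W hW (cup ≫ F ≫ cap) := by
      simp [cup, F, cap, Pivotal.ptrL, PivotalData.ptrL]
    _ = t _ hVVW (F ≫ (P.evR V ≫ P.coevL V) ▷ W) := by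
      rw [ht.cyclic _ _ hVVW]
      simp [cup, cap]
    _ = t _ hVV (P.dual V ◁ P.ptrR f ≫ P.evR V ≫ P.coevL V) := by
      rw [ht.map_tensor _ _ hVV, P.ptrR_comp_whiskerRight, P.ptrR_whiskerLeft]
    _ = t (P.dual V) hV' (P.dualHom (P.ptrR f)) := by
      rw [ht.map_tensor _ _ hV', P.ptrR_evR_coevL]

theorem map_ptrRDual (ht : IsRightTrace P I t) (hI : IsRightIdeal I) {U V : C} (hU : I U)
    (hUV : I (U ⊗ P.dual V)) (F : U ⊗ P.dual V ⟶ U ⊗ P.dual V) :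
    t U hU (P.ptrRDual F) = t (U ⊗ P.dual V) hUV F := by
  have hUVV : I ((U ⊗ P.dual V) ⊗ V) := hI.tensor_mem _ _ hUV
  let a := α_ U (P.dual V) V
  calc
    t U hU (P.ptrRDual F) = t U hU (((ρ_ U).inv ≫ U ◁ P.coevL V ≫ a.inv) ≫
        (F ▷ V ≫ a.hom ≫ U ◁ P.evR V ≫ (ρ_ U).hom)) := by
      simp [a, Pivotal.ptrRDual]
    _ = t _ hUVV (F ▷ V ≫ a.hom ≫ U ◁ (P.dual V ◁ 𝟙 V ≫ P.evR V ≫ P.coevL V) ≫ a.inv) := by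
      rw [ht.cyclic _ _ hUVV]
      simp [a]
    _ = t _ hUV (F ≫ U ◁ P.dualHom (𝟙 V)) := by
      rw [ht.map_tensor _ _ hUV, P.ptrR_whiskerRight_comp, P.ptrR_whiskerLeft, P.ptrR_evR_coevL]
    _ = t (U ⊗ P.dual V) hUV F := by
      rw [P.dualHom_id, MonoidalCategory.whiskerLeft_id, Category.comp_id]

end IsRightTrace

namespace Horiz

variable {k : Type*} [CommRing k] {C : Type u} [Category.{v} C] [MonoidalCategory C]
  {P : Pivotal C} {I : C → Prop} {t : ∀ V : C, I V → (V ⟶ V) → k}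

theorem map_comp_eq (ht : IsRightTrace P I t) {V W : C} (h : Horiz P I t V) (hW : I W)
    (hW' : I (P.dual W)) (f : W ⟶ V) (g : V ⟶ W) :
    t W hW (f ≫ g) = t (P.dual W) hW' (P.dualHom (f ≫ g)) := by
  obtain ⟨hV, hV', h⟩ := h
  calc
    t W hW (f ≫ g) = t V hV (g ≫ f) := ht.cyclic _ _ _ _ _ _
    _ = t _ hV' (P.dualHom f ≫ P.dualHom g) := by rw [h, P.dualHom_comp]
    _ = t _ hW' (P.dualHom g ≫ P.dualHom f) := ht.cyclic _ _ _ _ _ _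
    _ = t _ hW' (P.dualHom (f ≫ g)) := by rw [P.dualHom_comp]

theorem of_isRetractOf (hI : IsRightIdeal I) (ht : IsRightTrace P I t) {V W : C}
    (hW : Horiz P I t W) (hVW : IsRetractOf V W) : Horiz P I t V := by
  have hV : I V := hI.of_isRetractOf V W hW.1 hVW
  have hV' : I (P.dual V) := hI.of_isRetractOf _ _ hW.2.1 (hVW.dual P)
  obtain ⟨α, β, hαβ⟩ := hVW
  refine ⟨hV, hV', fun f => ?_⟩
  have factor : f = (f ≫ α) ≫ β := by rw [Category.assoc, hαβ, Category.comp_id]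
  rw [factor]
  exact hW.map_comp_eq ht hV hV' _ _

theorem dual (hI : IsRightIdeal I) (ht : IsRightTrace P I t) {V : C} (h : Horiz P I t V) :
    Horiz P I t (P.dual V) := by
  obtain ⟨hV, hV', h⟩ := h
  have hV'' : I (P.dual (P.dual V)) := hI.of_iso (P.doubleDualIso V).symm hV
  refine ⟨hV', hV'', fun f => ?_⟩
  obtain ⟨g, rfl⟩ := P.dualHom_surjective V V f
  rw [← h g, P.dualHom_dualHom, ht.map_conj_iso hV]

theorem tensor (hI : IsRightIdeal I) (ht : IsRightTrace P I t) {V W : C} (hVt : Horiz P I t V)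
    (hWt : Horiz P I t W) : Horiz P I t (V ⊗ W) := by
  obtain ⟨hV, hV', hVt⟩ := hVt
  obtain ⟨hW, hW', hWt⟩ := hWt
  have hVW : I (V ⊗ W) := hI.tensor_mem _ _ hV
  have hWV' : I (P.dual W ⊗ P.dual V) := hI.tensor_mem _ _ hW'
  have hVW' : I (P.dual (V ⊗ W)) := hI.of_iso (P.dualTensorIso V W) hWV'
  refine ⟨hVW, hVW', fun f => ?_⟩
  calc
    t _ hVW f = t V hV (P.ptrR f) := ht.map_tensor _ _ _ _ _
    _ = t _ hV' (P.dualHom (P.ptrR f)) := hVt _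
    _ = t W hW (P.ptrL f) := (ht.map_ptrL hI _ _ _).symm
    _ = t _ hW' (P.dualHom (P.ptrL f)) := hWt _
    _ = t _ hWV' (P.dualTensorHom f) := by rw [P.dualHom_ptrL, ht.map_ptrRDual hI]
    _ = t _ hVW' (P.dualHom f) := ht.map_conj_iso _ _ _ _

theorem of_sum_comp_eq_id [Preadditive C] [MonoidalPreadditive C] (ht : IsRightTrace P I t)
    (hadd : ∀ (V : C) (hV : I V) (f g : V ⟶ V), t V hV (f + g) = t V hV f + t V hV g)
    {ι : Type*} [Fintype ι] {V : ι → C} {W : C} (hV : ∀ i, Horiz P I t (V i)) (hW : I W)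
    (hW' : I (P.dual W)) (α : ∀ i, V i ⟶ W) (β : ∀ i, W ⟶ V i)
    (hsum : ∑ i, β i ≫ α i = 𝟙 W) : Horiz P I t W := by
  refine ⟨hW, hW', fun f => ?_⟩
  let T : (W ⟶ W) →+ k := AddMonoidHom.mk' (t W hW) (hadd W hW)
  let T' : (W ⟶ W) →+ k := AddMonoidHom.mk' (fun g => t (P.dual W) hW' (P.dualHom g))
    fun g h => by rw [P.dualHom_add, hadd]
  have decomposition : f = ∑ i, (f ≫ β i) ≫ α i := by
    simp only [Category.assoc, ← Preadditive.comp_sum, hsum, Category.comp_id]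
  change T f = T' f
  rw [decomposition, map_sum, map_sum]
  exact Finset.sum_congr rfl fun i _ => (hV i).map_comp_eq ht hW hW' _ _

end Horiz

theorem horizontal_part_pseudo_monoid_general {k : Type*} [CommRing k]
    {C : Type u} [Category.{v} C] [MonoidalCategory C] [Preadditive C] [MonoidalPreadditive C]
    {P : Pivotal C} {I : C → Prop} (hI : IsRightIdeal I)
    {t : ∀ V : C, I V → (V ⟶ V) → k} (ht : IsRightTrace P I t)
    (hadd : ∀ (V : C) (hV : I V) (f g : V ⟶ V), t V hV (f + g) = t V hV f + t V hV g) :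
    (∀ V : C, Horiz P I t V → Horiz P I t (P.dual V)) ∧
    (∀ V W : C, Horiz P I t W → IsRetractOf V W → Horiz P I t V) ∧
    (∀ V W : C, Horiz P I t V → Horiz P I t W → Horiz P I t (V ⊗ W)) ∧
    (∀ (n : ℕ) (Vi : Fin n → C) (W : C), (∀ i, Horiz P I t (Vi i)) →
        I W → I (P.dual W) → IsDirectSumOf W Vi → Horiz P I t W) := by
  refine ⟨fun V => Horiz.dual hI ht, fun V W => Horiz.of_isRetractOf hI ht,
    fun V W => Horiz.tensor hI ht, ?_⟩
  rintro n Vi W hVi hW hW' ⟨α, β, -, -, hsum⟩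
  exact Horiz.of_sum_comp_eq_id ht hadd hVi hW hW' α β hsum

/-- the horizontal part `I^=` of a right ideal `I` carrying a right trace `t`
is a pseudo-monoid (closed under duals, retracts and tensor products), and it is stable
under direct sums in the weak sense: a direct sum `W` of a finite family of objects of
`I^=` with `W ∈ I` and `W* ∈ I` lies in `I^=`. -/
theorem horizontal_part_pseudo_monoid {k : Type*} [CommRing k] [IsDomain k]
    {C : Type u} [Category.{v} C] [MonoidalCategory C] [Preadditive C]
    [CategoryTheory.Linear k C] [MonoidalPreadditive C] [MonoidalLinear k C]
    (hk : Function.Bijective fun a : k => a • (𝟙 (𝟙_ C)))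
    (P : Pivotal C)
    -- `I` is a right ideal
    (I : C → Prop)
    (hI₁ : ∀ V W : C, I V → I (V ⊗ W))
    (hI₂ : ∀ V W : C, I W → IsRetractOf V W → I V)
    -- `t` is a right trace on `I`
    (t : ∀ V : C, I V → (V ⟶ V) → k)
    (htlin : ∀ (V : C) (hV : I V), IsLinearMap k (t V hV))
    (htcyc : ∀ (U V : C) (hU : I U) (hV : I V) (f : V ⟶ U) (g : U ⟶ V),
        t V hV (f ≫ g) = t U hU (g ≫ f))
    (htptr : ∀ (U W : C) (hU : I U) (hUW : I (U ⊗ W)) (f : U ⊗ W ⟶ U ⊗ W),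
        t (U ⊗ W) hUW f = t U hU (P.ptrR f)) :
    (∀ V : C, Horiz P I t V → Horiz P I t (P.dual V)) ∧
    (∀ V W : C, Horiz P I t W → IsRetractOf V W → Horiz P I t V) ∧
    (∀ V W : C, Horiz P I t V → Horiz P I t W → Horiz P I t (V ⊗ W)) ∧
    (∀ (n : ℕ) (Vi : Fin n → C) (W : C), (∀ i, Horiz P I t (Vi i)) →
        I W → I (P.dual W) → IsDirectSumOf W Vi → Horiz P I t W) :=
  horizontal_part_pseudo_monoid_general ⟨hI₁, hI₂⟩ ⟨htcyc, htptr⟩ fun V hV => (htlin V hV).map_add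
end

section
/- Let G be the group with underlying set {(κ, ε, φ) : κ ∈ ℂ∖{0}, ε ∈ ℂ, φ ∈ ℂ} and multiplication (κ, ε, φ)·(κ', ε', φ') = (κκ', ε' + εκ', φκ' + φ'), and let X = {(κ, ε, φ) ∈ G : κ + κ⁻¹ − εφκ⁻¹ = 2 or κ + κ⁻¹ − εφκ⁻¹ = −2}. Then X is small in G: for every finite family g_1, …, g_n ∈ G, the union ⋃_{i=1}^n g_iX is not all of G. -/
open scoped Pointwise

/-- The group `G = {(κ, ε, φ) : κ ∈ ℂˣ, ε, φ ∈ ℂ}` with multiplication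
`(κ, ε, φ)·(κ', ε', φ') = (κκ', ε' + εκ', φκ' + φ')`, i.e. the componentwise matrix
multiplication of the pairs `M(κ,ε,φ) = ([[1, ε], [0, κ]], [[κ, 0], [φ, 1]])`. -/
@[ext]
structure Gsl2 where
  kappa : ℂˣ
  eps : ℂ
  phi : ℂ

namespace Gsl2

instance : Mul Gsl2 :=
  ⟨fun a b => ⟨a.kappa * b.kappa, b.eps + a.eps * (b.kappa : ℂ), a.phi * (b.kappa : ℂ) + b.phi⟩⟩

instance : One Gsl2 := ⟨⟨1, 0, 0⟩⟩

instance : Inv Gsl2 :=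
  ⟨fun a => ⟨a.kappa⁻¹, -a.eps * ((a.kappa⁻¹ : ℂˣ) : ℂ), -a.phi * ((a.kappa⁻¹ : ℂˣ) : ℂ)⟩⟩

@[simp] lemma mul_kappa (a b : Gsl2) : (a * b).kappa = a.kappa * b.kappa := rfl
@[simp] lemma mul_eps (a b : Gsl2) : (a * b).eps = b.eps + a.eps * (b.kappa : ℂ) := rfl
@[simp] lemma mul_phi (a b : Gsl2) : (a * b).phi = a.phi * (b.kappa : ℂ) + b.phi := rfl
@[simp] lemma one_kappa : (1 : Gsl2).kappa = 1 := rfl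
@[simp] lemma one_eps : (1 : Gsl2).eps = 0 := rfl
@[simp] lemma one_phi : (1 : Gsl2).phi = 0 := rfl
@[simp] lemma inv_kappa (a : Gsl2) : a⁻¹.kappa = a.kappa⁻¹ := rfl
@[simp] lemma inv_eps (a : Gsl2) : a⁻¹.eps = -a.eps * ((a.kappa⁻¹ : ℂˣ) : ℂ) := rfl
@[simp] lemma inv_phi (a : Gsl2) : a⁻¹.phi = -a.phi * ((a.kappa⁻¹ : ℂˣ) : ℂ) := rfl

instance : Group Gsl2 where
  mul_assoc a b c := by ext <;> simp [mul_assoc] <;> ring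
  one_mul a := by ext <;> simp
  mul_one a := by ext <;> simp
  inv_mul_cancel a := by
    have h : ((a.kappa⁻¹ : ℂˣ) : ℂ) * (a.kappa : ℂ) = 1 := by
      rw [← Units.val_mul, inv_mul_cancel, Units.val_one]
    ext <;> simp [mul_assoc, h]

end Gsl2

/-- The singular locus `X = {(κ, ε, φ) : κ + κ⁻¹ − εφκ⁻¹ = ±2}`. -/
def singularLocus : Set Gsl2 :=
  {g | (g.kappa : ℂ) + (g.kappa : ℂ)⁻¹ - g.eps * g.phi * (g.kappa : ℂ)⁻¹ = 2 ∨
       (g.kappa : ℂ) + (g.kappa : ℂ)⁻¹ - g.eps * g.phi * (g.kappa : ℂ)⁻¹ = -2}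

/-!
The singular locus is the union of the surfaces `εφ = (κ - 1)²` and `εφ = (κ + 1)²`. A translate
of it meets the line `{(1, t, t) : t ∈ ℂ}` where `t` solves one of two monic quadratic equations,
hence in at most four points, whereas the line has the cardinality of the continuum.
-/

open Set
open Cardinal hiding univ

universe u v

lemma finite_setOf_add_mul_add_eq {R : Type*} [CommRing R] [NoZeroDivisors R] (a b c : R) :
    {t : R | (t + a) * (t + b) = c}.Finite := by
  rcases {t : R | (t + a) * (t + b) = c}.eq_empty_or_nonempty with h | ⟨r, hr : _ = c⟩
  · exact h ▸ finite_empty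
  · refine (toFinite {r, -(a + b) - r}).subset fun t (ht : _ = c) ↦ ?_
    have hfactor : (t - r) * (t - (-(a + b) - r)) = 0 := by linear_combination ht - hr
    exact (mul_eq_zero.mp hfactor).imp sub_eq_zero.mp sub_eq_zero.mp

lemma iUnion_ne_univ_of_finite_of_lift_mk_lt {α : Type u} {ι : Type v} [Infinite α] {s : ι → Set α}
    (hs : ∀ i, (s i).Finite) (hι : lift.{u} #ι < lift.{v} #α) : (⋃ i, s i) ≠ univ := by
  intro hcover
  rcases finite_or_infinite ι with _ | _
  · exact infinite_univ (hcover ▸ finite_iUnion hs)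
  · refine hι.not_ge ?_
    calc
      lift.{v} #α = lift.{v} #(⋃ i, s i) := by rw [hcover, mk_univ]
      _ ≤ lift.{u} #ι * ⨆ i, lift.{v} #(s i) := mk_iUnion_le_lift s
      _ ≤ lift.{u} #ι * ℵ₀ := by
        gcongr
        exact ciSup_le' fun i ↦ lift_le_aleph0.mpr (hs i).lt_aleph0.le
      _ = lift.{u} #ι := mul_aleph0_eq (aleph0_le_lift.mpr (aleph0_le_mk ι))

lemma mem_singularLocus_iff {g : Gsl2} :
    g ∈ singularLocus ↔
      g.eps * g.phi = ((g.kappa : ℂ) - 1) ^ 2 ∨ g.eps * g.phi = ((g.kappa : ℂ) + 1) ^ 2 := by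
  have hκ : (g.kappa : ℂ) ≠ 0 := g.kappa.ne_zero
  refine or_congr ?_ ?_ <;> field_simp <;> constructor <;> intro h <;> linear_combination -h

lemma finite_setOf_mul_mem_singularLocus (g : Gsl2) :
    {t : ℂ | g * ⟨1, t, t⟩ ∈ singularLocus}.Finite := by
  have hquadratics : {t : ℂ | g * ⟨1, t, t⟩ ∈ singularLocus} =
      {t | (t + g.eps) * (t + g.phi) = ((g.kappa : ℂ) - 1) ^ 2} ∪
        {t | (t + g.eps) * (t + g.phi) = ((g.kappa : ℂ) + 1) ^ 2} := by
    ext t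
    simp [mem_singularLocus_iff, add_comm t g.phi]
  rw [hquadratics]
  exact (finite_setOf_add_mul_add_eq ..).union (finite_setOf_add_mul_add_eq ..)

theorem singularLocus_small_general {ι : Type u} (hι : #ι < 𝔠) (g : ι → Gsl2) :
    (⋃ i, (fun x => g i * x) '' singularLocus) ≠ (Set.univ : Set Gsl2) := by
  intro hcover
  refine iUnion_ne_univ_of_finite_of_lift_mk_lt
    (fun i ↦ finite_setOf_mul_mem_singularLocus (g i)⁻¹) (by simpa using hι) ?_
  refine eq_univ_of_forall fun t ↦ ?_
  have ht : (⟨1, t, t⟩ : Gsl2) ∈ ⋃ i, (fun x => g i * x) '' singularLocus := hcover ▸ mem_univ _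
  simpa only [image_mul_left, mem_iUnion, mem_preimage, mem_ofPred_eq] using ht

/-- the singular locus `X` is small in `G`: no finite family of left
translates of `X` covers `G`. -/
theorem singularLocus_small (n : ℕ) (g : Fin n → Gsl2) :
    (⋃ i, (fun x => g i * x) '' singularLocus) ≠ (Set.univ : Set Gsl2) := by
  exact singularLocus_small_general (mk_fin n ▸ nat_lt_continuum n) g
end

section
/- Let ℓ ≥ 2 be an integer and set r = ℓ if ℓ is odd and r = ℓ/2 if ℓ is even. For x ∈ ℂ write q^x = exp(2πix/ℓ) and ⟨x⟩ = q^x − q^{−x}. Then for every α ∈ ℂ with 2α ∉ ℤ, all the quantities ⟨α+r−j⟩ for j = 1, …, r−1 and ⟨rα⟩ are non-zero, and ∏_{j=1}^{r−1} ⟨j⟩/⟨α+r−j⟩ = r·⟨α⟩/⟨rα⟩. -/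
open Complex

/-- `ξ^x = exp(2πix/ℓ)`. -/
noncomputable def xiPow (ℓ : ℕ) (x : ℂ) : ℂ :=
  Complex.exp (2 * Real.pi * Complex.I * x / ℓ)

/-- `⟨x⟩ = ξ^x − ξ^{−x}`. -/
noncomputable def qbr (ℓ : ℕ) (x : ℂ) : ℂ :=
  xiPow ℓ x - xiPow ℓ (-x)

/-!
Write `z = q^α`. Reversing the order of the numerators turns the product into that of the ratios
`⟨r - j⟩ / ⟨α + r - j⟩`, and since `q^(2r) = 1` each of these equals
`z⁻¹ (1 - ζ^j) / (1 - ζ^j z⁻²)` with `ζ = q²` a primitive `r`-th root of unity. The factorization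
`1 - y^r = ∏_{0 ≤ j < r} (1 - ζ^j y)`, together with its consequence `r = ∏_{0 < j < r} (1 - ζ^j)`
(cancel `1 - y` and set `y = 1`), then evaluates the product.
-/

open Finset

section RootsOfUnity

theorem prod_range_one_sub_pow_mul {R : Type*} [CommRing R] [IsDomain R] {ζ : R} {n : ℕ}
    (hn : 0 < n) (hζ : IsPrimitiveRoot ζ n) (y : R) :
    ∏ j ∈ range n, (1 - ζ ^ j * y) = 1 - y ^ n := by
  simpa [Polynomial.eval_prod] using
    (congrArg (Polynomial.eval 1) (X_pow_sub_C_eq_prod hζ hn (rfl : y ^ n = y ^ n))).symm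

theorem prod_Ico_one_sub_pow_div {K : Type*} [Field K] {ζ y : K} {n : ℕ}
    (hζ : IsPrimitiveRoot ζ n) (hy : y ^ n ≠ 1) :
    ∏ j ∈ Ico 1 n, (1 - ζ ^ j) / (1 - ζ ^ j * y) = n * (1 - y) / (1 - y ^ n) := by
  have hn : 0 < n := Nat.pos_of_ne_zero fun h ↦ hy (by rw [h, pow_zero])
  have hden : (1 - y) * ∏ j ∈ Ico 1 n, (1 - ζ ^ j * y) = 1 - y ^ n := by
    rw [← prod_range_one_sub_pow_mul hn hζ, range_eq_Ico, prod_eq_prod_Ico_succ_bot hn, pow_zero,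
      one_mul]
  have hnum : ∏ j ∈ Ico 1 n, (1 - ζ ^ j) = n := by
    obtain ⟨m, rfl⟩ := Nat.exists_eq_add_one_of_ne_zero hn.ne'
    rw [prod_Ico_eq_prod_range, Nat.add_sub_cancel, Nat.cast_add_one,
      ← hζ.prod_one_sub_pow_eq_order]
    simp only [add_comm 1]
  have hyn : (1 - y) * ∏ j ∈ Ico 1 n, (1 - ζ ^ j * y) ≠ 0 := hden ▸ sub_ne_zero.mpr hy.symm
  rw [prod_div_distrib, hnum, ← hden, mul_comm (1 - y),
    mul_div_mul_right _ _ (left_ne_zero_of_mul hyn)]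

theorem isPrimitiveRoot_sq {M : Type*} [CommMonoid M] {ζ : M} {ℓ r : ℕ} (hℓ : 0 < ℓ)
    (hζ : IsPrimitiveRoot ζ ℓ) (hodd : Odd ℓ → r = ℓ) (heven : Even ℓ → 2 * r = ℓ) :
    IsPrimitiveRoot (ζ ^ 2) r := by
  rcases Nat.even_or_odd ℓ with h | h
  · exact hζ.pow hℓ (heven h).symm
  · exact hodd h ▸ hζ.pow_of_coprime 2 (Nat.coprime_two_left.mpr h)

end RootsOfUnity

section SubInv

variable {K : Type*} [Field K] {q w z : K} {r : ℕ}

/-- The bracket `⟨x⟩` as a function `t ↦ t - t⁻¹` of `t = q^x`, which makes sense in any field. -/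
def subInv (t : K) : K := t - t⁻¹

theorem subInv_eq_mul (hw : w ≠ 0) : subInv w = w * (1 - w⁻¹ ^ 2) := by
  rw [subInv]
  field_simp

theorem subInv_ne_zero (hw : w ≠ 0) (h : w ^ 2 ≠ 1) : subInv w ≠ 0 := by
  rw [subInv_eq_mul hw, inv_pow]
  exact mul_ne_zero hw (sub_ne_zero.mpr (inv_ne_one.mpr h).symm)

theorem subInv_div_subInv_mul (hw : w ≠ 0) (hz : z ≠ 0) :
    subInv w / subInv (z * w) = z⁻¹ * ((1 - w⁻¹ ^ 2) / (1 - w⁻¹ ^ 2 * z⁻¹ ^ 2)) := by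
  rw [subInv_eq_mul hw, subInv_eq_mul (mul_ne_zero hz hw), mul_inv_rev, mul_pow, mul_comm z,
    mul_assoc, mul_div_mul_left _ _ hw, ← div_div, div_right_comm, div_eq_inv_mul]

theorem inv_pow_div_pow_sq (hq : (q ^ 2) ^ r = 1) (j : ℕ) :
    (q ^ r / q ^ j)⁻¹ ^ 2 = (q ^ 2) ^ j := by
  rw [inv_div, div_pow, ← pow_mul', ← pow_mul', pow_mul, pow_mul, hq, div_one]

theorem prod_Ico_subInv_pow (hq : q ≠ 0) (r : ℕ) :
    ∏ j ∈ Ico 1 r, subInv (q ^ j) = ∏ j ∈ Ico 1 r, subInv (q ^ r / q ^ j) := by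
  have hreflect := prod_Ico_reflect (fun j ↦ subInv (q ^ j)) 1 (Nat.le_succ r)
  rw [Nat.add_sub_cancel_left, Nat.add_sub_cancel] at hreflect
  rw [← hreflect]
  refine prod_congr rfl fun j hj ↦ ?_
  rw [pow_sub₀ q hq (mem_Ico.mp hj).2.le, div_eq_mul_inv]

theorem prod_Ico_subInv_pow_div (hq : IsPrimitiveRoot (q ^ 2) r) (hz : z ≠ 0)
    (hzr : z ^ (2 * r) ≠ 1) :
    ∏ j ∈ Ico 1 r, subInv (q ^ j) / subInv (z * (q ^ r / q ^ j)) =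
      r * subInv z / subInv (z ^ r) := by
  have hr : r ≠ 0 := fun h ↦ hzr (by rw [h, mul_zero, pow_zero])
  have hq0 : q ≠ 0 := (pow_ne_zero_iff two_ne_zero).mp (hq.ne_zero hr)
  have hy : (z⁻¹ ^ 2) ^ r ≠ 1 := by rwa [← pow_mul, inv_pow, inv_ne_one]
  calc
    _ = ∏ j ∈ Ico 1 r, subInv (q ^ r / q ^ j) / subInv (z * (q ^ r / q ^ j)) := by
      rw [prod_div_distrib, prod_Ico_subInv_pow hq0, prod_div_distrib]
    _ = ∏ j ∈ Ico 1 r, z⁻¹ * ((1 - (q ^ 2) ^ j) / (1 - (q ^ 2) ^ j * z⁻¹ ^ 2)) := by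
      refine prod_congr rfl fun j _ ↦ ?_
      rw [subInv_div_subInv_mul (div_ne_zero (pow_ne_zero r hq0) (pow_ne_zero j hq0)) hz,
        inv_pow_div_pow_sq hq.pow_eq_one]
    _ = z⁻¹ ^ (r - 1) * (r * (1 - z⁻¹ ^ 2) / (1 - (z⁻¹ ^ 2) ^ r)) := by
      rw [prod_mul_distrib, prod_const, Nat.card_Ico, prod_Ico_one_sub_pow_div hq hy]
    _ = r * subInv z / subInv (z ^ r) := by
      rw [subInv_eq_mul hz, subInv_eq_mul (pow_ne_zero r hz), ← inv_pow, pow_right_comm,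
        ← pow_sub_one_mul hr z, inv_pow z (r - 1)]
      field_simp

theorem subInv_mul_ne_zero (hw : (w ^ 2) ^ r = 1) (hw0 : w ≠ 0) (hz : z ≠ 0)
    (hzr : z ^ (2 * r) ≠ 1) : subInv (z * w) ≠ 0 := by
  refine subInv_ne_zero (mul_ne_zero hz hw0) fun h ↦ hzr ?_
  calc z ^ (2 * r) = (z ^ 2) ^ r * (w ^ 2) ^ r := by rw [hw, mul_one, pow_mul]
    _ = 1 := by rw [← mul_pow, ← mul_pow, h, one_pow]

theorem modified_dimension_identity_general (hq : IsPrimitiveRoot (q ^ 2) r) (hz : z ≠ 0)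
    (hzr : z ^ (2 * r) ≠ 1) :
    (∀ j ∈ Icc 1 (r - 1), subInv (z * q ^ r / q ^ j) ≠ 0) ∧
    subInv (z ^ r) ≠ 0 ∧
    ∏ j ∈ Icc 1 (r - 1), subInv (q ^ j) / subInv (z * q ^ r / q ^ j) =
      r * subInv z / subInv (z ^ r) := by
  have hr : r ≠ 0 := fun h ↦ hzr (by rw [h, mul_zero, pow_zero])
  have hq0 : q ≠ 0 := (pow_ne_zero_iff two_ne_zero).mp (hq.ne_zero hr)
  have hroot (j : ℕ) : ((q ^ r / q ^ j) ^ 2) ^ r = 1 := by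
    rw [← inv_inj, inv_one, ← inv_pow, ← inv_pow, inv_pow_div_pow_sq hq.pow_eq_one,
      pow_right_comm, hq.pow_eq_one, one_pow]
  simp only [mul_div_assoc z]
  refine ⟨fun j _ ↦ ?_, ?_, ?_⟩
  · exact subInv_mul_ne_zero (hroot j) (div_ne_zero (pow_ne_zero r hq0) (pow_ne_zero j hq0)) hz hzr
  · exact subInv_ne_zero (pow_ne_zero r hz) (by rwa [← pow_mul'])
  · rw [Icc_sub_one_right_eq_Ico_of_not_isMin (not_isMin_iff_ne_bot.mpr hr),
      prod_Ico_subInv_pow_div hq hz hzr]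

end SubInv

section XiPow

variable (ℓ : ℕ)

theorem xiPow_ne_zero (x : ℂ) : xiPow ℓ x ≠ 0 := exp_ne_zero _

theorem xiPow_add (x y : ℂ) : xiPow ℓ (x + y) = xiPow ℓ x * xiPow ℓ y := by
  rw [xiPow, mul_add, add_div, exp_add, ← xiPow, ← xiPow]

theorem xiPow_neg (x : ℂ) : xiPow ℓ (-x) = (xiPow ℓ x)⁻¹ := by
  rw [xiPow, mul_neg, neg_div, exp_neg, ← xiPow]

theorem xiPow_sub (x y : ℂ) : xiPow ℓ (x - y) = xiPow ℓ x / xiPow ℓ y := by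
  rw [sub_eq_add_neg, xiPow_add, xiPow_neg, div_eq_mul_inv]

theorem xiPow_natCast_mul (n : ℕ) (x : ℂ) : xiPow ℓ (n * x) = xiPow ℓ x ^ n := by
  rw [xiPow, mul_left_comm, mul_div_assoc, exp_nat_mul, ← xiPow]

theorem xiPow_natCast (n : ℕ) : xiPow ℓ n = xiPow ℓ 1 ^ n := by
  rw [← xiPow_natCast_mul, mul_one]

theorem qbr_eq_subInv (x : ℂ) : qbr ℓ x = subInv (xiPow ℓ x) := by
  rw [qbr, xiPow_neg, subInv]

variable {ℓ}

theorem isPrimitiveRoot_xiPow_one (hℓ : ℓ ≠ 0) : IsPrimitiveRoot (xiPow ℓ 1) ℓ := by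
  rw [xiPow, mul_one]
  exact isPrimitiveRoot_exp ℓ hℓ

theorem xiPow_eq_one_iff (hℓ : ℓ ≠ 0) (x : ℂ) : xiPow ℓ x = 1 ↔ ∃ n : ℤ, x = n * ℓ := by
  have hℓ' : (ℓ : ℂ) ≠ 0 := Nat.cast_ne_zero.mpr hℓ
  rw [xiPow, exp_eq_one_iff]
  refine exists_congr fun n ↦ ?_
  rw [mul_div_assoc, mul_comm, mul_left_inj' two_pi_I_ne_zero, div_eq_iff hℓ']

theorem xiPow_pow_two_mul_ne_one (hℓ : ℓ ≠ 0) {r : ℕ} (hr : r ∣ ℓ) {α : ℂ}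
    (hα : ∀ n : ℤ, 2 * α ≠ n) : xiPow ℓ α ^ (2 * r) ≠ 1 := by
  obtain ⟨m, rfl⟩ := hr
  have hr0 : (r : ℂ) ≠ 0 := Nat.cast_ne_zero.mpr (left_ne_zero_of_mul hℓ)
  rw [← xiPow_natCast_mul, Ne, xiPow_eq_one_iff hℓ]
  rintro ⟨n, hn⟩
  refine hα (n * m) (mul_left_cancel₀ hr0 ?_)
  push_cast at hn ⊢
  linear_combination hn

end XiPow

/-- for `ℓ ≥ 2`, `r = ℓ` if `ℓ` is odd and `r = ℓ/2` if `ℓ` is even, and any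
`α ∈ ℂ` with `2α ∉ ℤ`, all the quantities `⟨α+r−j⟩` (`j = 1, …, r−1`) and `⟨rα⟩` are
non-zero, and `∏_{j=1}^{r−1} ⟨j⟩/⟨α+r−j⟩ = r⟨α⟩/⟨rα⟩`. -/
theorem modified_dimension_identity (ℓ : ℕ) (hℓ : 2 ≤ ℓ) (r : ℕ)
    (hrodd : Odd ℓ → r = ℓ) (hreven : Even ℓ → 2 * r = ℓ)
    (α : ℂ) (hα : ∀ n : ℤ, 2 * α ≠ (n : ℂ)) :
    (∀ j ∈ Finset.Icc 1 (r - 1), qbr ℓ (α + (r : ℂ) - (j : ℂ)) ≠ 0) ∧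
    qbr ℓ ((r : ℂ) * α) ≠ 0 ∧
    (∏ j ∈ Finset.Icc 1 (r - 1), qbr ℓ ((j : ℕ) : ℂ) / qbr ℓ (α + (r : ℂ) - (j : ℂ)))
      = (r : ℂ) * qbr ℓ α / qbr ℓ ((r : ℂ) * α) := by
  have hℓ0 : ℓ ≠ 0 := by omega
  have hξ : IsPrimitiveRoot (xiPow ℓ 1) ℓ := isPrimitiveRoot_xiPow_one hℓ0
  have hq : IsPrimitiveRoot (xiPow ℓ 1 ^ 2) r := isPrimitiveRoot_sq (by omega) hξ hrodd hreven
  have hr : r ∣ ℓ := hq.dvd_of_pow_eq_one ℓ (by rw [pow_right_comm, hξ.pow_eq_one, one_pow])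
  simp only [qbr_eq_subInv, xiPow_sub, xiPow_add, xiPow_natCast_mul, xiPow_natCast]
  exact modified_dimension_identity_general hq (xiPow_ne_zero ℓ α)
    (xiPow_pow_two_mul_ne_one hℓ0 hr hα)
end
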